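/- Let d ≥ 3 be odd, n = (d²+1)/2, and in R = 𝔽₂[x]/(xⁿ−1) set a = 1+x and b = (1+x)·P_d(x). Define O : R² → R² by O(u, v) = (x·v(x^d), u(x^d)), where x ↦ x^d is the ring automorphism of R (which is bijective since gcd(d, n) = 1 and d² ≡ −1 (mod n)). Then: (i) O is an 𝔽₂-linear bijection induced by a permutation of the 2n coordinate positions; (ii) O(C₂(a,b)) = C₂(a,b) and O(C₁(a,b)) = C₁(a,b); (iii) O((1, P_d(x))) ∈ (1, P_d(x)) + C₂(a,b); (iv) with u(x) = 1 + x^d + ⋯ + x^{d·((d−1)/2 − 1)} and v(x) = x^{n−(d+1)/2} + ⋯ + x^{n−1}, O maps the coset (u, v) + C₂(a,b) onto the coset (x·v(x^d), u(x^d)) + C₂(a,b) and maps (x·v(x^d), u(x^d)) + C₂(a,b) onto (u, v) + C₂(a,b). (Hence O implements a logical CNOT between the two logical qubits by relabeling data qubits.) -/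

import Mathlib

open Polynomial

noncomputable section

/-- `R2 n` is the ring `𝔽₂[x]/(xⁿ − 1)`. -/
abbrev R2 (n : ℕ) : Type := AdjoinRoot (X ^ n - 1 : (ZMod 2)[X])

/-- The image of `x` in `𝔽₂[x]/(xⁿ − 1)`. -/
def xR (n : ℕ) : R2 n := AdjoinRoot.root _

/-- The quotient map `𝔽₂[x] → 𝔽₂[x]/(xⁿ − 1)`. -/
def mkR (n : ℕ) : (ZMod 2)[X] →+* R2 n := AdjoinRoot.mk _

lemma xR_pow_n (n : ℕ) : xR n ^ n = 1 := by
  have h : (AdjoinRoot.mk (X ^ n - 1 : (ZMod 2)[X])) (X ^ n - 1) = 0 := AdjoinRoot.mk_self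
  rw [map_sub, map_pow, AdjoinRoot.mk_X, map_one, sub_eq_zero] at h
  exact h

/-- The unique representative of degree `< n` of an element of `𝔽₂[x]/(xⁿ − 1)` (junk if `n = 0`). -/
def repP {n : ℕ} (u : R2 n) : (ZMod 2)[X] :=
  if h : n = 0 then 0
  else AdjoinRoot.modByMonicHom (by simpa using monic_X_pow_sub_C (1 : ZMod 2) h) u

/-- The Hamming weight of an element of `𝔽₂[x]/(xⁿ − 1)`: the number of nonzero coefficients
of its degree-`< n` representative. -/
def wt {n : ℕ} (u : R2 n) : ℕ := (repP u).support.card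

/-- Coefficient of the degree-`< n` representative, indexed by `ℤ/n`. -/
def coeffZ {n : ℕ} (u : R2 n) (i : ZMod n) : ZMod 2 := (repP u).coeff i.val

/-- The X-stabilizer space `C₂(a,b) = {(r·a, r·b) : r ∈ R}` of the GB code of `(a,b)`. -/
def C2set (n : ℕ) (a b : R2 n) : Set (R2 n × R2 n) := {p | ∃ r : R2 n, p = (r * a, r * b)}

/-- The space `C₁(a,b) = {(u,v) : u·b + v·a = 0}` of the GB code of `(a,b)`. -/
def C1set (n : ℕ) (a b : R2 n) : Set (R2 n × R2 n) := {p | p.1 * b + p.2 * a = 0}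

/-- The (X-side) minimum distance of the GB code of `(a,b)`. -/
def dGB (n : ℕ) (a b : R2 n) : ℕ :=
  sInf {k | ∃ p ∈ C1set n a b \ C2set n a b, wt p.1 + wt p.2 = k}

/-- `P_m(x) = 1 + x + ⋯ + x^{m−1}` as a polynomial over `𝔽₂`. -/
def PmP (m : ℕ) : (ZMod 2)[X] := ∑ i ∈ Finset.range m, X ^ i

/-- `P_m(x) = 1 + x + ⋯ + x^{m−1}` as an element of `𝔽₂[x]/(xⁿ − 1)`. -/
def PmR (n m : ℕ) : R2 n := ∑ i ∈ Finset.range m, xR n ^ i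

/-- The ring endomorphism of `𝔽₂[x]/(xⁿ − 1)` induced by `x ↦ x^d`. -/
def substHom (n d : ℕ) : R2 n →+* R2 n :=
  AdjoinRoot.lift (algebraMap (ZMod 2) (R2 n)) (xR n ^ d) (by
    simp only [eval₂_sub, eval₂_X_pow, eval₂_one]
    rw [← pow_mul, mul_comm d n, pow_mul, xR_pow_n, one_pow, sub_self])

/-- The Euclidean inner product on `𝔽₂²ⁿ`, in terms of pairs `(u₁, u₂)` of elements of
`𝔽₂[x]/(xⁿ − 1)` (representing the concatenated binary vector `(u₁ | u₂)`). -/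
def eucInner (n : ℕ) (p q : R2 n × R2 n) : ZMod 2 :=
  ∑ i ∈ Finset.range n,
    ((repP p.1).coeff i * (repP q.1).coeff i + (repP p.2).coeff i * (repP q.2).coeff i)

/-- The symplectic inner product of `u₁ + w·u₂` and `v₁ + w·v₂`, i.e.
`Σᵢ (u₁ᵢ·v₂ᵢ + u₂ᵢ·v₁ᵢ)`, in terms of the pairs `(u₁,u₂)`, `(v₁,v₂)`. -/
def sympInner (n : ℕ) (p q : R2 n × R2 n) : ZMod 2 :=
  ∑ i ∈ Finset.range n,
    ((repP p.1).coeff i * (repP q.2).coeff i + (repP p.2).coeff i * (repP q.1).coeff i)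

/-- Euclidean dual of a set of (pairs representing) binary vectors of length `2n`. -/
def eucDual (n : ℕ) (S : Set (R2 n × R2 n)) : Set (R2 n × R2 n) :=
  {p | ∀ q ∈ S, eucInner n q p = 0}

/-- Symplectic dual of a set of (pairs representing) vectors of `𝔽₄ⁿ`. -/
def sympDual (n : ℕ) (S : Set (R2 n × R2 n)) : Set (R2 n × R2 n) :=
  {p | ∀ q ∈ S, sympInner n q p = 0}

/-- Number of nonzero `𝔽₄`-coordinates of `u₁ + w·u₂`, in terms of the pair `(u₁,u₂)`. -/
def wt4 (n : ℕ) (p : R2 n × R2 n) : ℕ := ((repP p.1).support ∪ (repP p.2).support).card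

/-- The `2n` binary coordinates of a pair `(u₁,u₂)`. -/
def coords {n : ℕ} (p : R2 n × R2 n) : (Fin n ⊕ Fin n) → ZMod 2 :=
  Sum.elim (fun i => (repP p.1).coeff i) (fun i => (repP p.2).coeff i)

/-- Vertex set of the Tanner graph: check vertices `x_t` (left) and data vertices
`q_s`, `q'_s` (right). -/
def TV (n : ℕ) : Type := (ZMod n) ⊕ ((ZMod n) ⊕ (ZMod n))

/-- `trel a b v w` holds iff `v` is a check vertex `x_t`, `w` is a data vertex, and they are
connected: `x_t ~ q_s` iff `a_{s−t} = 1`, and `x_t ~ q'_s` iff `b_{s−t} = 1`. -/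
def trel {n : ℕ} (a b : R2 n) (v w : TV n) : Prop :=
  ∃ t s : ZMod n, v = Sum.inl t ∧
    ((w = Sum.inr (Sum.inl s) ∧ coeffZ a (s - t) = 1) ∨
     (w = Sum.inr (Sum.inr s) ∧ coeffZ b (s - t) = 1))

/-- The Tanner graph `T(a,b)` of the GB code of `(a,b)`. -/
def tanner (n : ℕ) (a b : R2 n) : SimpleGraph (TV n) where
  Adj v w := trel a b v w ∨ trel a b w v
  symm := ⟨fun v w h => Or.symm h⟩
  loopless := ⟨by
    rintro v (⟨t, s, hv, hw⟩ | ⟨t, s, hv, hw⟩) <;>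
      rcases hw with ⟨hw, -⟩ | ⟨hw, -⟩ <;> (subst hv; simp at hw)⟩

end

noncomputable section

/-! Let `N = 1 + x + ⋯ + x^(n-1)`. For every `r`, the product `r * N` is `0` or `N`, so it is fixed
both by multiplication by `x` and by the substitution `x ↦ x^d`; hence `O (N • p) = N • p.swap`.
Multiplication by `a = 1 + x` maps `C₁(a,b)` into `C₂(a,b)`, and for odd `n` the element `1 - N` is
a multiple of `1 + x`, so that `p ≡ N • p` modulo `C₂(a,b)` for every `p ∈ C₁(a,b)`. Therefore `O`
acts on `C₁(a,b) / C₂(a,b)` by exchanging the two components of `N • p`: it is an involution there,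
and it fixes the class of `(1, P_d)` because `N • (1, P_d) = (N, N)` for odd `d`.
-/

lemma image_eq_of_forall_mem_iff {α β : Type*} {f : α → β} {s : Set α} {t : Set β}
    (hf : Function.Surjective f) (h : ∀ x, f x ∈ t ↔ x ∈ s) : f '' s = t := by
  have hpre : f ⁻¹' t = s := Set.ext h
  rw [← hpre, Set.image_preimage_eq t hf]

section Coefficients

variable {n : ℕ}

lemma xR_pow_mod (n k : ℕ) : xR n ^ (k % n) = xR n ^ k := by
  conv_rhs => rw [← Nat.mod_add_div k n, pow_add, pow_mul, xR_pow_n, one_pow, mul_one]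

lemma isUnit_xR (hn : n ≠ 0) : IsUnit (xR n) :=
  .of_pow_eq_one (xR_pow_n n) hn

@[elab_as_elim]
lemma R2_induction {P : R2 n → Prop} (u : R2 n) (zero : P 0)
    (add : ∀ u v, P u → P v → P (u + v)) (pow : ∀ k, P (xR n ^ k)) : P u := by
  induction u using AdjoinRoot.induction_on with
  | ih p =>
    induction p using Polynomial.induction_on' with
    | add p q hp hq => simpa only [map_add] using add _ _ hp hq
    | monomial k c =>
      obtain rfl | rfl : c = 0 ∨ c = 1 := by revert c; decide
      · simpa only [monomial_zero_right, map_zero] using zero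
      · simpa only [monomial_one_right_eq_X_pow, map_pow, AdjoinRoot.mk_X, xR] using pow k

lemma repP_zero : repP (0 : R2 n) = 0 := by
  unfold repP
  split_ifs <;> simp

lemma repP_add (u v : R2 n) : repP (u + v) = repP u + repP v := by
  unfold repP
  split_ifs <;> simp

lemma repP_xR_pow {k : ℕ} (hk : k < n) : repP (xR n ^ k) = X ^ k := by
  have hn : n ≠ 0 := by omega
  have hmonic : (X ^ n - 1 : (ZMod 2)[X]).Monic := monic_X_pow_sub_C 1 hn
  have hdegree : (X ^ n - 1 : (ZMod 2)[X]).degree = n :=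
    degree_X_pow_sub_C (Nat.pos_of_ne_zero hn) 1
  have hmk : xR n ^ k = AdjoinRoot.mk (X ^ n - 1 : (ZMod 2)[X]) (X ^ k) := by
    rw [map_pow, AdjoinRoot.mk_X, xR]
  rw [repP, dif_neg hn, hmk, AdjoinRoot.modByMonicHom_mk, modByMonic_eq_self_iff hmonic, hdegree,
    degree_X_pow]
  exact_mod_cast hk

lemma coeff_repP_of_perm (f : R2 n →+ R2 n) (σ : Equiv.Perm (Fin n))
    (hf : ∀ i : Fin n, f (xR n ^ (i : ℕ)) = xR n ^ (σ i : ℕ)) (u : R2 n) (i : Fin n) :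
    (repP (f u)).coeff i = (repP u).coeff (σ.symm i) := by
  induction u using R2_induction with
  | zero => simp only [map_zero, repP_zero, coeff_zero]
  | add u v hu hv => simp only [map_add, repP_add, coeff_add, hu, hv]
  | pow k =>
    have hk : k % n < n := Nat.mod_lt k i.pos
    rw [← xR_pow_mod n k, hf ⟨k % n, hk⟩, repP_xR_pow hk, repP_xR_pow (Fin.is_lt _),
      coeff_X_pow, coeff_X_pow]
    refine if_congr ?_ rfl rfl
    rw [Fin.val_inj, ← σ.symm_apply_eq, Fin.ext_iff]

lemma exists_perm_mul_add_mod {d : ℕ} (h : d.Coprime n) (c : ℕ) :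
    ∃ σ : Equiv.Perm (Fin n), ∀ i, (σ i : ℕ) = (d * i + c) % n := by
  let f : Fin n → Fin n := fun i => ⟨(d * i + c) % n, Nat.mod_lt _ i.pos⟩
  have hf : Function.Injective f := fun i j hij => by
    have hmod : d * i + c ≡ d * j + c [MOD n] := congrArg Fin.val hij
    have hmod' : (i : ℕ) ≡ j [MOD n] :=
      (hmod.add_right_cancel' c).cancel_left_of_coprime h.symm
    exact Fin.ext (hmod'.eq_of_lt_of_lt i.is_lt j.is_lt)
  exact ⟨.ofBijective f (Finite.injective_iff_bijective.mp hf), fun _ => rfl⟩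

end Coefficients

section Substitution

variable {n d : ℕ}

lemma substHom_xR (n d : ℕ) : substHom n d (xR n) = xR n ^ d :=
  AdjoinRoot.lift_root _

lemma substHom_substHom_eq_self {e : ℕ} (h : d * e ≡ 1 [MOD n]) (u : R2 n) :
    substHom n d (substHom n e u) = u := by
  induction u using R2_induction with
  | zero => simp only [map_zero]
  | add u v hu hv => rw [map_add, map_add, hu, hv]
  | pow k =>
    rw [map_pow, map_pow, substHom_xR, map_pow, substHom_xR, ← pow_mul _ d e,
      ← xR_pow_mod n (d * e), h, xR_pow_mod, pow_one]

lemma substHom_bijective (hn : n ≠ 0) (h : d.Coprime n) : Function.Bijective (substHom n d) := by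
  obtain ⟨e, -, he⟩ := Nat.exists_mul_mod_eq_of_coprime 1 h hn
  have he' : e * d ≡ 1 [MOD n] := by rwa [mul_comm]
  exact Function.bijective_iff_has_inverse.mpr
    ⟨substHom n e, substHom_substHom_eq_self he', substHom_substHom_eq_self he⟩

end Substitution

section GeometricSum

variable {n d : ℕ}

lemma one_add_xR_mul_PmR (n m : ℕ) : (1 + xR n) * PmR n m = 1 + xR n ^ m := by
  rw [add_comm 1, add_comm 1, ← ZModModule.sub_eq_add, ← ZModModule.sub_eq_add]
  exact mul_geom_sum (xR n) m

lemma one_add_xR_dvd_one_sub_PmR {m : ℕ} (hm : Odd m) : 1 + xR n ∣ 1 - PmR n m := by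
  obtain ⟨k, rfl⟩ := hm
  have hsum : 1 - PmR n (2 * k + 1) = ∑ i ∈ Finset.range (2 * k + 1), (1 - xR n ^ i) := by
    rw [Finset.sum_sub_distrib, PmR, Finset.sum_const, Finset.card_range, add_nsmul, mul_nsmul',
      ZModModule.char_nsmul_eq_zero, zero_add, one_nsmul]
  rw [hsum]
  refine Finset.dvd_sum fun i _ => ?_
  exact ⟨PmR n i, by rw [ZModModule.sub_eq_add, one_add_xR_mul_PmR]⟩

lemma xR_mul_PmR_self (n : ℕ) : xR n * PmR n n = PmR n n := by
  have h := one_add_xR_mul_PmR n n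
  rw [xR_pow_n, ZModModule.add_self, add_mul, one_mul, ← ZModModule.sub_eq_add] at h
  exact (sub_eq_zero.mp h).symm

lemma xR_pow_mul_PmR_self (n k : ℕ) : xR n ^ k * PmR n n = PmR n n := by
  induction k with
  | zero => rw [pow_zero, one_mul]
  | succ k ih => rw [pow_succ, mul_assoc, xR_mul_PmR_self, ih]

lemma PmR_mul_PmR_self {m : ℕ} (hm : Odd m) : PmR n m * PmR n n = PmR n n := by
  obtain ⟨r, hr⟩ := one_add_xR_dvd_one_sub_PmR (n := n) hm
  have h : (1 + xR n) * PmR n n = 0 := by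
    rw [one_add_xR_mul_PmR, xR_pow_n, ZModModule.add_self]
  linear_combination -PmR n n * hr - r * h

lemma substHom_PmR_self (h : d.Coprime n) : substHom n d (PmR n n) = PmR n n := by
  obtain ⟨σ, hσ⟩ := exists_perm_mul_add_mod h 0
  calc substHom n d (PmR n n) = ∑ i : Fin n, xR n ^ (σ i : ℕ) := by
        simp only [PmR, map_sum, map_pow, substHom_xR, ← pow_mul, Finset.sum_range, hσ, add_zero,
          xR_pow_mod]
    _ = ∑ i : Fin n, xR n ^ (i : ℕ) := Equiv.sum_comp σ fun i : Fin n => xR n ^ (i : ℕ)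
    _ = PmR n n := by rw [PmR, Finset.sum_range]

lemma substHom_mul_PmR_self (h : d.Coprime n) (r : R2 n) :
    substHom n d (r * PmR n n) = r * PmR n n := by
  induction r using R2_induction with
  | zero => rw [zero_mul, map_zero]
  | add r s hr hs => rw [add_mul, map_add, hr, hs]
  | pow k => rw [xR_pow_mul_PmR_self, substHom_PmR_self h]

end GeometricSum

section Stabilizer

variable {n : ℕ} {a b : R2 n}

/-- The X-stabilizer space `C₂(a,b)` as an `R`-submodule of `R²`, so that equality of logical
classes can be written as congruence modulo it. -/
def stabilizerSubmodule (n : ℕ) (a b : R2 n) : Submodule (R2 n) (R2 n × R2 n) :=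
  Submodule.span (R2 n) {(a, b)}

lemma mem_stabilizerSubmodule {p : R2 n × R2 n} :
    p ∈ stabilizerSubmodule n a b ↔ p ∈ C2set n a b :=
  Submodule.mem_span_singleton.trans (exists_congr fun _ => eq_comm)

lemma exists_mem_C2set_eq_add_iff {p q : R2 n × R2 n} :
    (∃ c ∈ C2set n a b, q = p + c) ↔ q ≡ p [SMOD stabilizerSubmodule n a b] := by
  simp only [SModEq.sub_mem, mem_stabilizerSubmodule, ← sub_eq_iff_eq_add', exists_eq_right']

lemma smul_mem_stabilizerSubmodule {p : R2 n × R2 n} (hp : p ∈ C1set n a b) :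
    a • p ∈ stabilizerSubmodule n a b := by
  have h : p.1 * b = p.2 * a := by
    rw [← sub_eq_zero, ZModModule.sub_eq_add]
    exact hp
  exact Submodule.mem_span_singleton.mpr ⟨p.1, Prod.ext (mul_comm _ _) (h.trans (mul_comm _ _))⟩

lemma smodEq_PmR_smul (hn : Odd n) {p : R2 n × R2 n} (hp : p ∈ C1set n (1 + xR n) b) :
    p ≡ PmR n n • p [SMOD stabilizerSubmodule n (1 + xR n) b] := by
  obtain ⟨r, hr⟩ := one_add_xR_dvd_one_sub_PmR (n := n) hn
  have h : p - PmR n n • p = r • (1 + xR n) • p := by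
    rw [smul_smul, mul_comm, ← hr, sub_smul, one_smul]
  rw [SModEq.sub_mem, h]
  exact Submodule.smul_mem _ r (smul_mem_stabilizerSubmodule hp)

lemma one_PmR_mem_C1set (n m : ℕ) :
    ((1 : R2 n), PmR n m) ∈ C1set n (1 + xR n) ((1 + xR n) * PmR n m) := by
  change 1 * ((1 + xR n) * PmR n m) + PmR n m * (1 + xR n) = 0
  rw [one_mul, mul_comm (PmR n m), ZModModule.add_self]

lemma geom_sum_mem_C1set {d m : ℕ} (h : d * m ≤ n) :
    (∑ i ∈ Finset.range m, xR n ^ (d * i), ∑ i ∈ Finset.Ico (d * m) n, xR n ^ i) ∈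
      C1set n (1 + xR n) ((1 + xR n) * PmR n d) := by
  have hu := geom_sum_mul (xR n ^ d) m
  have hv := geom_sum_Ico_mul (xR n) h
  simp only [← pow_mul, xR_pow_n, ZModModule.sub_eq_add] at hu hv
  change _ * ((1 + xR n) * PmR n d) + _ * (1 + xR n) = 0
  rw [one_add_xR_mul_PmR, add_comm 1 (xR n ^ d), add_comm 1 (xR n), hu, hv, add_comm 1,
    ZModModule.add_self]

end Stabilizer

section TwistedSwap

variable {n d : ℕ} {a b : R2 n}

/-- The additive map `O(u, v) = (x·v(x^d), u(x^d))` on `R²`. -/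
def twistedSwap (n d : ℕ) : R2 n × R2 n →+ R2 n × R2 n where
  toFun p := (xR n * substHom n d p.2, substHom n d p.1)
  map_zero' := by simp
  map_add' p q := by simp [mul_add]

lemma twistedSwap_apply (p : R2 n × R2 n) :
    twistedSwap n d p = (xR n * substHom n d p.2, substHom n d p.1) := rfl

lemma twistedSwap_bijective (hn : n ≠ 0) (h : d.Coprime n) :
    Function.Bijective (twistedSwap n d) := by
  have hσ := substHom_bijective hn h
  have hx : Function.Bijective (xR n * ·) := IsUnit.isUnit_iff_mulLeft_bijective.mp (isUnit_xR hn)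
  exact ((hx.comp hσ).prodMap hσ).comp Prod.swap_bijective

lemma exists_perm_coords_twistedSwap (h : d.Coprime n) :
    ∃ π : (Fin n ⊕ Fin n) ≃ (Fin n ⊕ Fin n),
      ∀ p k, coords (twistedSwap n d p) k = coords p (π k) := by
  obtain ⟨σ, hσ⟩ := exists_perm_mul_add_mod h 0
  obtain ⟨τ, hτ⟩ := exists_perm_mul_add_mod h 1
  refine ⟨(Equiv.sumCongr τ.symm σ.symm).trans (Equiv.sumComm _ _), fun p k => ?_⟩
  rcases k with i | i
  · refine coeff_repP_of_perm
      ((AddMonoidHom.mulLeft (xR n)).comp (substHom n d).toAddMonoidHom) τ (fun i => ?_) p.2 i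
    simp [hτ, xR_pow_mod, substHom_xR, pow_succ', pow_mul]
  · refine coeff_repP_of_perm (substHom n d).toAddMonoidHom σ (fun i => ?_) p.1 i
    simp [hσ, xR_pow_mod, substHom_xR, pow_mul]

lemma twistedSwap_PmR_smul (h : d.Coprime n) (p : R2 n × R2 n) :
    twistedSwap n d (PmR n n • p) = PmR n n • p.swap := by
  ext
  · change xR n * substHom n d (PmR n n * p.2) = PmR n n * p.2
    rw [mul_comm (PmR n n), substHom_mul_PmR_self h, mul_left_comm, xR_mul_PmR_self]
  · change substHom n d (PmR n n * p.1) = PmR n n * p.1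
    rw [mul_comm (PmR n n), substHom_mul_PmR_self h]

lemma twistedSwap_mem_C1set_iff (hn : n ≠ 0) (h : d.Coprime n) (hab : substHom n d a = b)
    (hba : xR n * substHom n d b = a) {p : R2 n × R2 n} :
    twistedSwap n d p ∈ C1set n a b ↔ p ∈ C1set n a b := by
  have hsyndrome : (twistedSwap n d p).1 * b + (twistedSwap n d p).2 * a =
      xR n * substHom n d (p.1 * b + p.2 * a) := by
    rw [twistedSwap_apply, map_add, map_mul, map_mul, hab]
    linear_combination -substHom n d p.1 * hba
  change _ = 0 ↔ _ = 0
  rw [hsyndrome, (isUnit_xR hn).mul_right_eq_zero,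
    map_eq_zero_iff _ (substHom_bijective hn h).injective]

lemma twistedSwap_mem_C2set_iff (hn : n ≠ 0) (h : d.Coprime n) (hab : substHom n d a = b)
    (hba : xR n * substHom n d b = a) {p : R2 n × R2 n} :
    twistedSwap n d p ∈ C2set n a b ↔ p ∈ C2set n a b := by
  have hmul (r : R2 n) :
      twistedSwap n d (r * a, r * b) = (substHom n d r * a, substHom n d r * b) := by
    rw [twistedSwap_apply, map_mul, map_mul, hab, mul_left_comm, hba]
  constructor
  · rintro ⟨r, hr⟩
    obtain ⟨s, rfl⟩ := (substHom_bijective hn h).surjective r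
    exact ⟨s, (twistedSwap_bijective hn h).injective (hr.trans (hmul s).symm)⟩
  · rintro ⟨r, rfl⟩
    exact ⟨_, hmul r⟩

lemma twistedSwap_image_C1set (hn : n ≠ 0) (h : d.Coprime n) (hab : substHom n d a = b)
    (hba : xR n * substHom n d b = a) : twistedSwap n d '' C1set n a b = C1set n a b :=
  image_eq_of_forall_mem_iff (twistedSwap_bijective hn h).surjective fun _ =>
    twistedSwap_mem_C1set_iff hn h hab hba

lemma twistedSwap_image_C2set (hn : n ≠ 0) (h : d.Coprime n) (hab : substHom n d a = b)
    (hba : xR n * substHom n d b = a) : twistedSwap n d '' C2set n a b = C2set n a b :=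
  image_eq_of_forall_mem_iff (twistedSwap_bijective hn h).surjective fun _ =>
    twistedSwap_mem_C2set_iff hn h hab hba

lemma twistedSwap_smodEq_iff (hn : n ≠ 0) (h : d.Coprime n) (hab : substHom n d a = b)
    (hba : xR n * substHom n d b = a) {p q : R2 n × R2 n} :
    twistedSwap n d p ≡ twistedSwap n d q [SMOD stabilizerSubmodule n a b] ↔
      p ≡ q [SMOD stabilizerSubmodule n a b] := by
  rw [SModEq.sub_mem, SModEq.sub_mem, ← map_sub, mem_stabilizerSubmodule, mem_stabilizerSubmodule,
    twistedSwap_mem_C2set_iff hn h hab hba]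

lemma twistedSwap_image_setOf_smodEq (hn : n ≠ 0) (h : d.Coprime n) (hab : substHom n d a = b)
    (hba : xR n * substHom n d b = a) (p : R2 n × R2 n) :
    twistedSwap n d '' {q | q ≡ p [SMOD stabilizerSubmodule n a b]} =
      {q | q ≡ twistedSwap n d p [SMOD stabilizerSubmodule n a b]} :=
  image_eq_of_forall_mem_iff (twistedSwap_bijective hn h).surjective fun _ =>
    twistedSwap_smodEq_iff hn h hab hba

end TwistedSwap

section LogicalAction

variable {n d : ℕ}

lemma coprime_of_dvd_sq_add_one (h : n ∣ d ^ 2 + 1) : d.Coprime n :=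
  .of_dvd_right h (by simp [sq])

lemma odd_base_of_two_mul_eq_sq_add_one (h : 2 * n = d ^ 2 + 1) : Odd d :=
  (Nat.odd_pow_iff two_ne_zero).mp ⟨n - 1, by omega⟩

lemma odd_of_two_mul_eq_sq_add_one (h : 2 * n = d ^ 2 + 1) : Odd n := by
  obtain ⟨m, rfl⟩ := odd_base_of_two_mul_eq_sq_add_one h
  exact ⟨m ^ 2 + m, by linarith⟩

lemma sub_half_succ_eq_mul_half_pred (h : 2 * n = d ^ 2 + 1) :
    n - (d + 1) / 2 = d * ((d - 1) / 2) := by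
  obtain ⟨m, rfl⟩ := odd_base_of_two_mul_eq_sq_add_one h
  have hpred : (2 * m + 1 - 1) / 2 = m := by omega
  have hsucc : (2 * m + 1 + 1) / 2 = m + 1 := by omega
  have hn : n = (2 * m + 1) * m + (m + 1) := by linarith
  rw [hpred, hsucc, hn, Nat.add_sub_cancel]

lemma substHom_one_add_xR (n d : ℕ) : substHom n d (1 + xR n) = (1 + xR n) * PmR n d := by
  rw [map_add, map_one, substHom_xR, one_add_xR_mul_PmR]

lemma xR_mul_substHom_one_add_xR_mul_PmR (h : n ∣ d ^ 2 + 1) :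
    xR n * substHom n d ((1 + xR n) * PmR n d) = 1 + xR n := by
  obtain ⟨k, hk⟩ := h
  have hx : xR n * xR n ^ d ^ 2 = 1 := by rw [← pow_succ', hk, pow_mul, xR_pow_n, one_pow]
  rw [one_add_xR_mul_PmR, map_add, map_one, map_pow, substHom_xR, ← pow_mul, ← sq, mul_add, hx,
    mul_one, add_comm]

lemma twistedSwap_smodEq_PmR_smul_swap (hn : Odd n) (h : n ∣ d ^ 2 + 1) {p : R2 n × R2 n}
    (hp : p ∈ C1set n (1 + xR n) ((1 + xR n) * PmR n d)) :
    twistedSwap n d p ≡ PmR n n • p.swap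
      [SMOD stabilizerSubmodule n (1 + xR n) ((1 + xR n) * PmR n d)] := by
  have hcop := coprime_of_dvd_sq_add_one h
  rw [← twistedSwap_PmR_smul hcop, twistedSwap_smodEq_iff hn.pos.ne' hcop (substHom_one_add_xR n d)
    (xR_mul_substHom_one_add_xR_mul_PmR h)]
  exact smodEq_PmR_smul hn hp

lemma twistedSwap_twistedSwap_smodEq (hn : Odd n) (h : n ∣ d ^ 2 + 1) {p : R2 n × R2 n}
    (hp : p ∈ C1set n (1 + xR n) ((1 + xR n) * PmR n d)) :
    twistedSwap n d (twistedSwap n d p) ≡ p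
      [SMOD stabilizerSubmodule n (1 + xR n) ((1 + xR n) * PmR n d)] := by
  have hcop := coprime_of_dvd_sq_add_one h
  calc twistedSwap n d (twistedSwap n d p)
    _ ≡ twistedSwap n d (PmR n n • p.swap) [SMOD _] :=
      (twistedSwap_smodEq_iff hn.pos.ne' hcop (substHom_one_add_xR n d)
        (xR_mul_substHom_one_add_xR_mul_PmR h)).mpr (twistedSwap_smodEq_PmR_smul_swap hn h hp)
    _ = PmR n n • p := by rw [twistedSwap_PmR_smul hcop, Prod.swap_swap]
    _ ≡ p [SMOD _] := (smodEq_PmR_smul hn hp).symm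

lemma twistedSwap_one_PmR_smodEq (hn : Odd n) (hd : Odd d) (h : n ∣ d ^ 2 + 1) :
    twistedSwap n d (1, PmR n d) ≡ (1, PmR n d)
      [SMOD stabilizerSubmodule n (1 + xR n) ((1 + xR n) * PmR n d)] := by
  have hp := one_PmR_mem_C1set n d
  have hswap : PmR n n • ((1 : R2 n), PmR n d).swap = PmR n n • (1, PmR n d) := by
    simp only [Prod.swap_prod_mk, Prod.smul_mk, smul_eq_mul, mul_one, mul_comm (PmR n n) (PmR n d),
      PmR_mul_PmR_self hd]
  exact (twistedSwap_smodEq_PmR_smul_swap hn h hp).trans (hswap ▸ (smodEq_PmR_smul hn hp).symm)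

lemma geom_sum_half_mem_C1set (h : 2 * n = d ^ 2 + 1) :
    (∑ i ∈ Finset.range ((d - 1) / 2), xR n ^ (d * i),
      ∑ i ∈ Finset.Ico (n - (d + 1) / 2) n, xR n ^ i) ∈
        C1set n (1 + xR n) ((1 + xR n) * PmR n d) := by
  have hindex := sub_half_succ_eq_mul_half_pred h
  rw [hindex]
  exact geom_sum_mem_C1set (hindex ▸ Nat.sub_le _ _)

theorem stmt_10_general (hn : Odd n) (hd : Odd d) (hdvd : n ∣ d ^ 2 + 1) {a b u v : R2 n}
    (ha : a = 1 + xR n) (hb : b = (1 + xR n) * PmR n d) (huv : (u, v) ∈ C1set n a b)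
    {O : R2 n × R2 n → R2 n × R2 n}
    (hO : O = fun p => (xR n * substHom n d p.2, substHom n d p.1)) :
    ((∀ p q, O (p + q) = O p + O q) ∧ Function.Bijective O ∧
      ∃ π : (Fin n ⊕ Fin n) ≃ (Fin n ⊕ Fin n), ∀ p k, coords (O p) k = coords p (π k)) ∧
    (O '' C2set n a b = C2set n a b ∧ O '' C1set n a b = C1set n a b) ∧
    (∃ c ∈ C2set n a b, O ((1 : R2 n), PmR n d) = ((1 : R2 n), PmR n d) + c) ∧
    (O '' {q | ∃ c ∈ C2set n a b, q = (u, v) + c} =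
        {q | ∃ c ∈ C2set n a b, q = (xR n * substHom n d v, substHom n d u) + c} ∧
      O '' {q | ∃ c ∈ C2set n a b, q = (xR n * substHom n d v, substHom n d u) + c} =
        {q | ∃ c ∈ C2set n a b, q = (u, v) + c}) := by
  have hn0 : n ≠ 0 := hn.pos.ne'
  have hcop := coprime_of_dvd_sq_add_one hdvd
  have hab := substHom_one_add_xR n d
  have hba := xR_mul_substHom_one_add_xR_mul_PmR hdvd
  subst ha hb
  obtain rfl : O = twistedSwap n d := hO
  have hcoset := twistedSwap_image_setOf_smodEq hn0 hcop hab hba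
  have hinvol := twistedSwap_twistedSwap_smodEq hn hdvd huv
  simp only [exists_mem_C2set_eq_add_iff, ← twistedSwap_apply (u, v)]
  refine ⟨⟨map_add _, twistedSwap_bijective hn0 hcop, exists_perm_coords_twistedSwap hcop⟩,
    ⟨twistedSwap_image_C2set hn0 hcop hab hba, twistedSwap_image_C1set hn0 hcop hab hba⟩,
    twistedSwap_one_PmR_smodEq hn hd hdvd, hcoset (u, v), ?_⟩
  exact (hcoset _).trans (Set.ext fun q => ⟨(·.trans hinvol), (·.trans hinvol.symm)⟩)

end LogicalAction

/-- For the `[[d²+1, 2, d]]` GB code (`d ≥ 3` odd, `2n = d²+1`,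
`a = 1+x`, `b = (1+x)·P_d(x)`), define `O(u,v) = (x·v(x^d), u(x^d))` (with `x ↦ x^d`
the ring endomorphism `substHom n d`).  Then:
(i) `O` is an `𝔽₂`-linear bijection induced by a permutation of the `2n` coordinate
positions;
(ii) `O` maps `C₂(a,b)` onto itself and `C₁(a,b)` onto itself;
(iii) `O((1, P_d)) ∈ (1, P_d) + C₂(a,b)`;
(iv) with `u, v` as in Statement 8, `O` maps the coset `(u,v) + C₂` onto
`(x·v(x^d), u(x^d)) + C₂` and vice versa.  (Hence `O` implements a logical CNOT by
relabeling data qubits.) -/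
theorem stmt_10 (d n : ℕ) (hd : Odd d) (hd3 : 3 ≤ d) (hn : 2 * n = d ^ 2 + 1)
    (a b u v : R2 n) (ha : a = 1 + xR n) (hb : b = (1 + xR n) * PmR n d)
    (hu : u = ∑ i ∈ Finset.range ((d - 1) / 2), xR n ^ (d * i))
    (hv : v = ∑ i ∈ Finset.Ico (n - (d + 1) / 2) n, xR n ^ i)
    (O : R2 n × R2 n → R2 n × R2 n)
    (hO : O = fun p => (xR n * substHom n d p.2, substHom n d p.1)) :
    ((∀ p q, O (p + q) = O p + O q) ∧ Function.Bijective O ∧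
      ∃ π : (Fin n ⊕ Fin n) ≃ (Fin n ⊕ Fin n), ∀ p k, coords (O p) k = coords p (π k)) ∧
    (O '' C2set n a b = C2set n a b ∧ O '' C1set n a b = C1set n a b) ∧
    (∃ c ∈ C2set n a b, O ((1 : R2 n), PmR n d) = ((1 : R2 n), PmR n d) + c) ∧
    (O '' {q | ∃ c ∈ C2set n a b, q = (u, v) + c} =
        {q | ∃ c ∈ C2set n a b, q = (xR n * substHom n d v, substHom n d u) + c} ∧
      O '' {q | ∃ c ∈ C2set n a b, q = (xR n * substHom n d v, substHom n d u) + c} =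
        {q | ∃ c ∈ C2set n a b, q = (u, v) + c}) := by
  refine stmt_10_general (odd_of_two_mul_eq_sq_add_one hn) hd (hn ▸ dvd_mul_left n 2) ha hb ?_ hO
  simpa only [ha, hb, hu, hv] using geom_sum_half_mem_C1set hn

end
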